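/- Assume Re(ν) > 0 and let ψ: (0,∞) → V be continuous, satisfy the Lewis equation at every x > 0, and satisfy x·ψ(x) → 0 as x → 0⁺. Then ψ is an eigenfunction with eigenvalue 1 of the transfer operator at 0, i.e. for every x > 0 one has ψ(x) = x^{−2ν−1}·Σ_{n=0}^∞ (n + 1/x)^{−2ν−1}·η(T(T')^n)^{−1}(ψ(1 + 1/(n + 1/x))). -/

import Mathlib

open Complex

/-- `SL₂(ℤ)`. -/
abbrev SL2Z := Matrix.SpecialLinearGroup (Fin 2) ℤ

/-- The matrix `T = [[1,1],[0,1]]`. -/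
def Tm : SL2Z := ⟨!![1, 1; 0, 1], by norm_num [Matrix.det_fin_two_of]⟩

/-- The matrix `S = [[0,1],[−1,0]]`. -/
def Sm : SL2Z := ⟨!![0, 1; -1, 0], by norm_num [Matrix.det_fin_two_of]⟩

/-- The matrix `T' = [[1,0],[1,1]]`. -/
def Tm' : SL2Z := ⟨!![1, 0; 1, 1], by norm_num [Matrix.det_fin_two_of]⟩

/-- The matrix `−I`. -/
def negI : SL2Z := ⟨!![-1, 0; 0, -1], by norm_num [Matrix.det_fin_two_of]⟩

/-- `ψ : (0,∞) → V` satisfies the Lewis equation with parameter `ν` at `x`. -/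
def LewisEqR {V : Type*} [NormedAddCommGroup V] [NormedSpace ℂ V]
    (η : SL2Z →* Module.End ℂ V) (ν : ℂ) (ψ : ℝ → V) (x : ℝ) : Prop :=
  η Tm (ψ x) =
    ψ (x + 1) +
      ((((x : ℂ) + 1)) ^ (-2 * ν - 1)) • η (Sm * Tm⁻¹) (ψ (x / (x + 1)))

lemma aux_bdd {V : Type*} [NormedAddCommGroup V] [NormedSpace ℂ V]
    [FiniteDimensional ℂ V] (A : Module.End ℂ V) (N : ℕ) (hN : 0 < N) (hA : A ^ N = 1) :
    ∃ C : ℝ, 0 ≤ C ∧ ∀ (n : ℕ) (v : V), ‖(A ^ n) v‖ ≤ C * ‖v‖ := by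
  refine ⟨∑ k ∈ Finset.range N, ‖LinearMap.toContinuousLinearMap (A ^ k)‖,
    Finset.sum_nonneg fun _ _ => norm_nonneg _, fun n v => ?_⟩
  have h1 : A ^ n = A ^ (n % N) := pow_eq_pow_mod n hA
  rw [h1]
  have h2 := (LinearMap.toContinuousLinearMap (A ^ (n % N))).le_opNorm v
  refine le_trans h2 (mul_le_mul_of_nonneg_right ?_ (norm_nonneg _))
  exact Finset.single_le_sum
    (f := fun k => ‖LinearMap.toContinuousLinearMap (A ^ k)‖)
    (fun _ _ => norm_nonneg _) (Finset.mem_range.2 (Nat.mod_lt _ hN))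

lemma aux_mat1 : Tm⁻¹ * (Sm * Tm⁻¹) = Tm'⁻¹ := by
  have hT : (Tm : Matrix (Fin 2) (Fin 2) ℤ) = !![1, 1; 0, 1] := rfl
  have hS : (Sm : Matrix (Fin 2) (Fin 2) ℤ) = !![0, 1; -1, 0] := rfl
  have hT' : (Tm' : Matrix (Fin 2) (Fin 2) ℤ) = !![1, 0; 1, 1] := rfl
  apply Subtype.ext
  simp only [Matrix.SpecialLinearGroup.coe_mul, Matrix.SpecialLinearGroup.coe_inv, hT, hS, hT',
    Matrix.adjugate_fin_two_of]
  simp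

lemma aux_mat2 : Tm'⁻¹ = Sm * Tm * Sm⁻¹ := by
  have hT : (Tm : Matrix (Fin 2) (Fin 2) ℤ) = !![1, 1; 0, 1] := rfl
  have hS : (Sm : Matrix (Fin 2) (Fin 2) ℤ) = !![0, 1; -1, 0] := rfl
  have hT' : (Tm' : Matrix (Fin 2) (Fin 2) ℤ) = !![1, 0; 1, 1] := rfl
  apply Subtype.ext
  simp only [Matrix.SpecialLinearGroup.coe_mul, Matrix.SpecialLinearGroup.coe_inv, hT, hS, hT',
    Matrix.adjugate_fin_two_of]
  simp

lemma aux_ord {V : Type*} [NormedAddCommGroup V] [NormedSpace ℂ V]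
    (η : SL2Z →* Module.End ℂ V) (N : ℕ) (hord : η Tm ^ N = 1) : η Tm'⁻¹ ^ N = 1 := by
  rw [aux_mat2, ← map_pow, conj_pow, map_mul, map_mul, map_pow, hord, mul_one, ← map_mul]
  simp

lemma aux_step {V : Type*} [NormedAddCommGroup V] [NormedSpace ℂ V]
    (η : SL2Z →* Module.End ℂ V) (ν : ℂ) (ψ : ℝ → V)
    (hψlewis : ∀ x : ℝ, 0 < x → LewisEqR η ν ψ x) (t : ℝ) (ht : 0 < t) :
    ((t : ℂ) ^ (-2 * ν - 1)) • ψ (1 / t) =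
      ((t : ℂ) ^ (-2 * ν - 1)) • η Tm⁻¹ (ψ (1 + 1 / t)) +
      η Tm'⁻¹ ((((t + 1 : ℝ) : ℂ) ^ (-2 * ν - 1)) • ψ (1 / (t + 1))) := by
  have h := hψlewis (1 / t) (by positivity)
  unfold LewisEqR at h
  have h2 := congrArg (fun v => ((t : ℂ) ^ (-2 * ν - 1)) • η Tm⁻¹ v) h
  simp only [map_add, map_smul, smul_add] at h2
  have e1 : η Tm⁻¹ (η Tm (ψ (1 / t))) = ψ (1 / t) := by
    rw [← Module.End.mul_apply, ← map_mul]; simp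
  have e2 : ∀ v, η Tm⁻¹ (η (Sm * Tm⁻¹) v) = η Tm'⁻¹ v := by
    intro v
    rw [← Module.End.mul_apply, ← map_mul, aux_mat1]
  have e3 : (1 / t) / (1 / t + 1) = 1 / (t + 1) := by field_simp; try ring
  have e4 : (t : ℂ) ^ (-2 * ν - 1) * (((1 / t : ℝ) : ℂ) + 1) ^ (-2 * ν - 1)
      = ((t + 1 : ℝ) : ℂ) ^ (-2 * ν - 1) := by
    have : (((1 / t : ℝ) : ℂ) + 1) = ((1 / t + 1 : ℝ) : ℂ) := by push_cast; ring
    rw [this, ← Complex.mul_cpow_ofReal_nonneg ht.le (by positivity), ← Complex.ofReal_mul]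
    congr 2
    field_simp; try ring
  rw [e1, e2, e3, smul_smul, e4, add_comm (1 / t) 1] at h2
  rw [h2, map_smul]

lemma aux_iter {V : Type*} [NormedAddCommGroup V] [NormedSpace ℂ V]
    (η : SL2Z →* Module.End ℂ V) (ν : ℂ) (ψ : ℝ → V)
    (hψlewis : ∀ x : ℝ, 0 < x → LewisEqR η ν ψ x) (t : ℝ) (ht : 0 < t) (M : ℕ) :
    ((t : ℂ) ^ (-2 * ν - 1)) • ψ (1 / t) =
      (∑ n ∈ Finset.range M, ((((n : ℝ) + t : ℝ) : ℂ) ^ (-2 * ν - 1)) •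
          η ((Tm * Tm' ^ n)⁻¹) (ψ (1 + 1 / ((n : ℝ) + t)))) +
      (η Tm'⁻¹ ^ M) ((((M + t : ℝ) : ℂ) ^ (-2 * ν - 1)) • ψ (1 / (M + t))) := by
  induction M with
  | zero => simp
  | succ M ih =>
    rw [ih, Finset.sum_range_succ, add_assoc]
    congr 1
    rw [aux_step η ν ψ hψlewis (M + t) (by positivity), map_add, map_smul]
    congr 1
    · rw [mul_inv_rev, map_mul, Module.End.mul_apply, ← inv_pow, map_pow]
    · rw [← Module.End.mul_apply, ← pow_succ]
      have : (M : ℝ) + t + 1 = ((M + 1 : ℕ) : ℝ) + t := by push_cast; ring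
      rw [this]

/-- If `Re(ν) > 0`, `ψ` is continuous on `(0,∞)`, satisfies the Lewis equation
there, and `x·ψ(x) → 0` as `x → 0⁺`, then `ψ` is an eigenfunction with
eigenvalue `1` of the transfer operator at `0`. -/
theorem stmt13 {V : Type*} [NormedAddCommGroup V] [NormedSpace ℂ V]
    [FiniteDimensional ℂ V] [Nontrivial V]
    (η : SL2Z →* Module.End ℂ V) (hη : η negI = 1)
    (N : ℕ) (hN : 0 < N) (hord : η Tm ^ N = 1)
    (ν : ℂ) (hν : 0 < ν.re)
    (ψ : ℝ → V) (hψcont : ContinuousOn ψ (Set.Ioi (0 : ℝ)))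
    (hψlewis : ∀ x : ℝ, 0 < x → LewisEqR η ν ψ x)
    (hψ0 : Filter.Tendsto (fun x : ℝ => x • ψ x)
      (nhdsWithin 0 (Set.Ioi (0 : ℝ))) (nhds 0)) :
    ∀ x : ℝ, 0 < x →
      ψ x = (((x : ℂ)) ^ (-2 * ν - 1)) •
        ∑' n : ℕ, (((((n : ℝ) + 1 / x : ℝ) : ℂ)) ^ (-2 * ν - 1)) •
          η ((Tm * Tm' ^ n)⁻¹) (ψ (1 + 1 / ((n : ℝ) + 1 / x))) := by
  intro x hx
  obtain ⟨C, hC0, hC⟩ := aux_bdd (η Tm'⁻¹) N hN (aux_ord η N hord)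
  obtain ⟨t, ht, rfl⟩ : ∃ t : ℝ, 0 < t ∧ x = 1 / t := ⟨1 / x, by positivity, by simp⟩
  simp only [one_div_one_div]
  set F : ℕ → V := fun n => ((((n : ℝ) + t : ℝ) : ℂ) ^ (-2 * ν - 1)) •
          η ((Tm * Tm' ^ n)⁻¹) (ψ (1 + 1 / ((n : ℝ) + t))) with hF
  have hre : (-2 * ν - 1).re = -(2 * ν.re + 1) := by simp; ring
  have hnorm : ∀ n : ℕ, ‖(((n : ℝ) + t : ℝ) : ℂ) ^ (-2 * ν - 1)‖
      = ((n : ℝ) + t) ^ (-(2 * ν.re + 1)) := by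
    intro n
    rw [Complex.norm_cpow_eq_rpow_re_of_pos (by positivity), hre]
  -- summability
  have hsum : Summable F := by
    have hcont : ContinuousOn (fun y => η Tm⁻¹ (ψ y)) (Set.Icc 1 (1 + 1 / t)) := by
      refine (LinearMap.continuous_of_finiteDimensional (η Tm⁻¹)).comp_continuousOn
        (hψcont.mono ?_)
      intro y hy
      exact lt_of_lt_of_le one_pos hy.1
    obtain ⟨K, hK⟩ := isCompact_Icc.exists_bound_of_continuousOn hcont
    have hs := (Real.summable_one_div_nat_add_rpow t (2 * ν.re + 1)).2 (by linarith)
    refine Summable.of_norm_bounded (hs.mul_right (C * K)) fun n => ?_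
    have hpos : 0 < (n : ℝ) + t := by positivity
    rw [hF]
    simp only
    rw [norm_smul, hnorm, Real.rpow_neg hpos.le, ← one_div, abs_of_pos hpos]
    refine mul_le_mul_of_nonneg_left ?_ (one_div_nonneg.2 (Real.rpow_nonneg hpos.le _))
    rw [mul_inv_rev, map_mul, Module.End.mul_apply, ← inv_pow, map_pow]
    refine (hC n _).trans (mul_le_mul_of_nonneg_left (hK _ ⟨?_, ?_⟩) hC0)
    · have : 0 < 1 / ((n : ℝ) + t) := by positivity
      linarith
    · have : 1 / ((n : ℝ) + t) ≤ 1 / t :=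
        one_div_le_one_div_of_le ht (by linarith [(Nat.cast_nonneg n : (0 : ℝ) ≤ n)])
      linarith
  -- remainder
  have hMt : Filter.Tendsto (fun M : ℕ => (M : ℝ) + t) Filter.atTop Filter.atTop :=
    Filter.tendsto_atTop_add_const_right _ _ tendsto_natCast_atTop_atTop
  have hrem : Filter.Tendsto (fun M : ℕ => (η Tm'⁻¹ ^ M)
      ((((M + t : ℝ) : ℂ) ^ (-2 * ν - 1)) • ψ (1 / (M + t)))) Filter.atTop (nhds 0) := by
    have h1 : Filter.Tendsto (fun M : ℕ => 1 / ((M : ℝ) + t)) Filter.atTop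
        (nhdsWithin 0 (Set.Ioi (0 : ℝ))) := by
      simp only [one_div]
      exact tendsto_inv_atTop_nhdsGT_zero.comp hMt
    have h2 := (hψ0.comp h1).norm
    have h3 := (tendsto_rpow_neg_atTop (y := 2 * ν.re) (by linarith)).comp hMt
    have h4 := (h3.mul h2).const_mul C
    simp only [norm_zero, mul_zero] at h4
    refine squeeze_zero_norm (fun M => ?_) h4
    have hpos : 0 < (M : ℝ) + t := by positivity
    refine (hC M _).trans (mul_le_mul_of_nonneg_left (le_of_eq ?_) hC0)
    simp only [Function.comp]
    rw [norm_smul, norm_smul, hnorm, neg_add, Real.rpow_add hpos, Real.rpow_neg_one,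
      Real.norm_of_nonneg (one_div_pos.2 hpos).le, mul_assoc, one_div]
  have hlim := hsum.hasSum.tendsto_sum_nat.add hrem
  have hconst : (fun M : ℕ => (∑ n ∈ Finset.range M, F n) + (η Tm'⁻¹ ^ M)
      ((((M + t : ℝ) : ℂ) ^ (-2 * ν - 1)) • ψ (1 / (M + t))))
      = fun _ => ((t : ℂ) ^ (-2 * ν - 1)) • ψ (1 / t) := by
    funext M
    exact (aux_iter η ν ψ hψlewis t ht M).symm
  rw [hconst, add_zero] at hlim
  have hfin := tendsto_nhds_unique hlim tendsto_const_nhds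
  rw [hfin, smul_smul, ← Complex.mul_cpow_ofReal_nonneg (by positivity) ht.le,
    ← Complex.ofReal_mul, one_div_mul_cancel ht.ne']
  simp
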